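/- Suppose f satisfies the (2r,4r)-restricted strong convexity and smoothness properties with parameter δ ∈ [0,1). Fix Y* ∈ ℝ^{p×r}_*, set X* := Y*Y*ᵀ and N := sup{⟨B, ∇f(X*)⟩ : rank(B) ≤ r, ‖B‖_F ≤ 1}. (ii) If β > 1, γ > 0, δ ≤ ((β² − 1)/(4(1+γ)))·‖Y*‖²/‖X*‖_F, N ≤ ((β² − 1)/4)·‖Y*‖², and Y ∈ ℝ^{p×r}_* satisfies ‖Y‖ > β‖Y*‖ and ‖YYᵀ‖_F ≤ γ‖X*‖_F, then ‖2∇f(YYᵀ)Y‖_F ≥ ‖Y‖³ − ‖Y‖·‖Y*‖² > (β³ − β)‖Y*‖³. (iii) If γ > 1, δ ≤ (γ − 1)/(4(γ + 1)), N ≤ ((γ − 1)/4)·‖X*‖_F, and Y ∈ ℝ^{p×r}_* satisfies ‖YYᵀ‖_F > γ‖X*‖_F, then ‖2∇f(YYᵀ)Y‖_F > (γ − 1)·γ^{1/2}·‖X*‖_F^{3/2}/√r. -/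

import Mathlib

open Matrix

/-- Trace inner product `⟨A,B⟩ = tr(AᵀB)`. -/
noncomputable def trInner {m n : ℕ} (A B : Matrix (Fin m) (Fin n) ℝ) : ℝ :=
  ∑ i, ∑ j, A i j * B i j

/-- Frobenius norm. -/
noncomputable def frob {m n : ℕ} (A : Matrix (Fin m) (Fin n) ℝ) : ℝ :=
  Real.sqrt (∑ i, ∑ j, (A i j) ^ 2)

open scoped Classical in
/-- The `i`-th largest eigenvalue (1-indexed, `1 ≤ i ≤ n`) of a Hermitian matrix; junk value 0
otherwise. -/
noncomputable def eigVal {n : ℕ} (A : Matrix (Fin n) (Fin n) ℝ) (i : ℕ) : ℝ :=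
  if hA : A.IsHermitian then
    if h : n - i < n then hA.eigenvalues (Tuple.sort hA.eigenvalues ⟨n - i, h⟩) else 0
  else 0

/-- The `i`-th largest singular value (1-indexed) of `Y`, so `sval Y 1 = ‖Y‖` (spectral norm)
and `sval Y r` is the least singular value. -/
noncomputable def sval {p r : ℕ} (Y : Matrix (Fin p) (Fin r) ℝ) (i : ℕ) : ℝ :=
  Real.sqrt (eigVal (Yᵀ * Y) i)

/-- `Q` is an orthogonal matrix. -/
def IsOrtho {r : ℕ} (Q : Matrix (Fin r) (Fin r) ℝ) : Prop := Qᵀ * Q = 1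

/-- The quotient distance `d(Y₁,Y₂) = min_{Q ∈ O(r)} ‖Y₂Q − Y₁‖_F`. -/
noncomputable def dOrth {p r : ℕ} (Y₁ Y₂ : Matrix (Fin p) (Fin r) ℝ) : ℝ :=
  sInf {c | ∃ Q : Matrix (Fin r) (Fin r) ℝ, IsOrtho Q ∧ c = frob (Y₂ * Q - Y₁)}

/-!
If the Hessian form of `f` lies between `m ‖·‖²` and `M ‖·‖²` on a linear space, then comparing `f`
with its second-order expansions at `x` and at `x + d` yields
`⟪g (x + d) - g x, b⟫ ≥ (m + M) / 2 * ⟪d, b⟫ - (M - m) / 2 * ‖d‖ * ‖b‖` for the gradient `g`. Rank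
constraints are not linear, but the matrices whose columns lie in `col Y + col X*` form a linear
space of matrices of rank at most `2 r`, and it contains `X*`, `Y Yᵀ` and every `Y C Yᵀ`.

Testing the gradient at `Y Yᵀ` against `Y C Yᵀ` is the same as testing `g (Y Yᵀ) Y` against `Y C`,
so `‖2 g (Y Yᵀ) Y‖ ‖Y C‖ ≥ 2 (⟪Y Yᵀ - X*, Y C Yᵀ⟫ - (δ ‖Y Yᵀ - X*‖ + N) ‖Y C Yᵀ‖)`. The choice
`C = v vᵀ`, with `v` a top right singular vector of `Y`, gives (ii), and `C = 1` gives (iii). The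
hypotheses make the error `δ ‖Y Yᵀ - X*‖ + N` at most half of the gap, which is `‖Y‖² - ‖Y*‖²` for
spectral norms in (ii) and `‖Y Yᵀ‖ - ‖X*‖` for Frobenius norms in (iii).
-/

open scoped InnerProductSpace

section Taylor

theorem le_taylor_of_deriv_deriv_le {φ φ' φ'' : ℝ → ℝ} {c : ℝ} (hφ : ∀ t, HasDerivAt φ (φ' t) t)
    (hφ' : ∀ t, HasDerivAt φ' (φ'' t) t) (hc : ∀ t, φ'' t ≤ c) :
    φ 1 ≤ φ 0 + φ' 0 + c / 2 := by
  have hψ (t : ℝ) : HasDerivAt (fun s ↦ φ s - c / 2 * s ^ 2) (φ' t - c * t) t :=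
    ((hφ t).fun_sub ((hasDerivAt_pow 2 t).const_mul (c / 2))).congr_deriv (by push_cast; ring)
  have hψ' (t : ℝ) : HasDerivAt (fun s ↦ φ' s - c * s) (φ'' t - c) t := by
    simpa using (hφ' t).fun_sub ((hasDerivAt_id t).const_mul c)
  have hconc : ConcaveOn ℝ Set.univ (fun s ↦ φ s - c / 2 * s ^ 2) :=
    concaveOn_of_hasDerivWithinAt2_nonpos convex_univ
      (fun t _ ↦ (hψ t).continuousAt.continuousWithinAt) (fun t _ ↦ (hψ t).hasDerivWithinAt)
      (fun t _ ↦ (hψ' t).hasDerivWithinAt) (fun t _ ↦ sub_nonpos.2 (hc t))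
  have hslope := hconc.slope_le_of_hasDerivAt (Set.mem_univ 0) (Set.mem_univ 1) one_pos (hψ 0)
  simp only [slope_def_field] at hslope
  linarith

variable {E : Type*} [AddCommGroup E] [Module ℝ E] {f f' f'' : E → ℝ} {e : E} {c : ℝ}

theorem hasDerivAt_comp_add_smul (hf : ∀ x, HasLineDerivAt ℝ f (f' x) x e) (x : E) (t : ℝ) :
    HasDerivAt (fun s : ℝ ↦ f (x + s • e)) (f' (x + t • e)) t := by
  have h : HasDerivAt (fun s : ℝ ↦ f (x + t • e + s • e)) (f' (x + t • e)) (t - t) := by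
    rw [sub_self]
    exact hf (x + t • e)
  simpa [add_assoc, ← add_smul] using h.comp_sub_const t t

theorem le_taylor_of_lineDeriv_lineDeriv_le (hf : ∀ x, HasLineDerivAt ℝ f (f' x) x e)
    (hf' : ∀ x, HasLineDerivAt ℝ f' (f'' x) x e) {x : E} (hc : ∀ t : ℝ, f'' (x + t • e) ≤ c) :
    f (x + e) ≤ f x + f' x + c / 2 := by
  simpa using le_taylor_of_deriv_deriv_le (hasDerivAt_comp_add_smul hf x)
    (hasDerivAt_comp_add_smul hf' x) hc

theorem taylor_le_of_le_lineDeriv_lineDeriv (hf : ∀ x, HasLineDerivAt ℝ f (f' x) x e)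
    (hf' : ∀ x, HasLineDerivAt ℝ f' (f'' x) x e) {x : E} (hc : ∀ t : ℝ, c ≤ f'' (x + t • e)) :
    f x + f' x + c / 2 ≤ f (x + e) := by
  have := le_taylor_of_lineDeriv_lineDeriv_le (f := -f) (f' := -f') (f'' := -f'') (c := -c)
    (fun x ↦ (hf x).neg) (fun x ↦ (hf' x).neg) (fun t ↦ neg_le_neg (hc t))
  simp only [Pi.neg_apply] at this
  linarith

end Taylor

section PinchedHessian

variable {V : Type*} [NormedAddCommGroup V] [InnerProductSpace ℝ V]

/-- `f` has gradient `g`, the derivative of `g` has quadratic form `h`, and this Hessian form is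
pinched between `m ‖e‖²` and `M ‖e‖²` at base points `x ∈ P` in directions `e ∈ Q`. All
derivatives are directional. Restricted strong convexity and smoothness with parameter `δ` is the
case where `P` and `Q` consist of matrices of bounded rank, `m = 1 - δ` and `M = 1 + δ`. -/
structure HasPinchedHessian (f : V → ℝ) (g : V → V) (h : V → V → ℝ) (P Q : Set V) (m M : ℝ) :
    Prop where
  hasLineDerivAt_fun : ∀ x e, HasLineDerivAt ℝ f ⟪g x, e⟫_ℝ x e
  hasLineDerivAt_grad : ∀ x e, HasLineDerivAt ℝ (fun y ↦ ⟪g y, e⟫_ℝ) (h x e) x e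
  le_hess : ∀ x ∈ P, ∀ e ∈ Q, m * ‖e‖ ^ 2 ≤ h x e
  hess_le : ∀ x ∈ P, ∀ e ∈ Q, h x e ≤ M * ‖e‖ ^ 2

namespace HasPinchedHessian

variable {f : V → ℝ} {g : V → V} {h : V → V → ℝ} {P Q P' Q' : Set V} {m M : ℝ}

theorem mono (hf : HasPinchedHessian f g h P Q m M) (hP : P' ⊆ P) (hQ : Q' ⊆ Q) :
    HasPinchedHessian f g h P' Q' m M where
  __ := hf
  le_hess x hx e he := hf.le_hess x (hP hx) e (hQ he)
  hess_le x hx e he := hf.hess_le x (hP hx) e (hQ he)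

variable {S : Submodule ℝ V} {x e d b : V}

theorem fun_add_le (hf : HasPinchedHessian f g h S S m M) (hx : x ∈ S) (he : e ∈ S) :
    f (x + e) ≤ f x + ⟪g x, e⟫_ℝ + M * ‖e‖ ^ 2 / 2 :=
  le_taylor_of_lineDeriv_lineDeriv_le (f'' := fun y ↦ h y e) (fun y ↦ hf.hasLineDerivAt_fun y e)
    (fun y ↦ hf.hasLineDerivAt_grad y e)
    (fun t ↦ hf.hess_le _ (S.add_mem hx (S.smul_mem t he)) _ he)

theorem le_fun_add (hf : HasPinchedHessian f g h S S m M) (hx : x ∈ S) (he : e ∈ S) :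
    f x + ⟪g x, e⟫_ℝ + m * ‖e‖ ^ 2 / 2 ≤ f (x + e) :=
  taylor_le_of_le_lineDeriv_lineDeriv (f'' := fun y ↦ h y e) (fun y ↦ hf.hasLineDerivAt_fun y e)
    (fun y ↦ hf.hasLineDerivAt_grad y e)
    (fun t ↦ hf.le_hess _ (S.add_mem hx (S.smul_mem t he)) _ he)

theorem le_inner_grad_sub_of_sq (hf : HasPinchedHessian f g h S S m M) (hx : x ∈ S) (hd : d ∈ S)
    (hb : b ∈ S) :
    (m + M) / 2 * ⟪d, b⟫_ℝ - (M - m) / 2 * (‖d‖ ^ 2 / 4 + ‖b‖ ^ 2) ≤ ⟪g (x + d) - g x, b⟫_ℝ := by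
  -- `f` is compared at `x + d / 2 ± b` with its Taylor polynomials based at `x` and at `x + d`.
  set p := (1 / 2 : ℝ) • d + b with hp
  set q := (1 / 2 : ℝ) • d - b with hq
  have hpS : p ∈ S := S.add_mem (S.smul_mem _ hd) hb
  have hqS : q ∈ S := S.sub_mem (S.smul_mem _ hd) hb
  have hxd : x + d ∈ S := S.add_mem hx hd
  have hlow := hf.le_fun_add hx hpS
  have hupp := hf.fun_add_le hx hqS
  have hlow' := hf.le_fun_add hxd (S.neg_mem hpS)
  have hupp' := hf.fun_add_le hxd (S.neg_mem hqS)
  rw [show x + d + -p = x + q by module, inner_neg_right, norm_neg] at hlow'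
  rw [show x + d + -q = x + p by module, inner_neg_right, norm_neg] at hupp'
  have hpn : ‖p‖ ^ 2 = ‖d‖ ^ 2 / 4 + ⟪d, b⟫_ℝ + ‖b‖ ^ 2 := by
    rw [hp, norm_add_sq_real, norm_smul, inner_smul_left]
    norm_num
    ring
  have hqn : ‖q‖ ^ 2 = ‖d‖ ^ 2 / 4 - ⟪d, b⟫_ℝ + ‖b‖ ^ 2 := by
    rw [hq, norm_sub_sq_real, norm_smul, inner_smul_left]
    norm_num
    ring
  have hpq (v : V) : ⟪v, p⟫_ℝ - ⟪v, q⟫_ℝ = 2 * ⟪v, b⟫_ℝ := by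
    rw [← inner_sub_right, show p - q = (2 : ℝ) • b by module, inner_smul_right]
  rw [hpn] at hlow hlow'
  rw [hqn] at hupp hupp'
  rw [inner_sub_left]
  linarith [hpq (g x), hpq (g (x + d))]

theorem le_inner_grad_sub (hf : HasPinchedHessian f g h S S m M) (hx : x ∈ S) (hd : d ∈ S)
    (hb : b ∈ S) :
    (m + M) / 2 * ⟪d, b⟫_ℝ - (M - m) / 2 * (‖d‖ * ‖b‖) ≤ ⟪g (x + d) - g x, b⟫_ℝ := by
  rcases eq_or_ne d 0 with rfl | hd0
  · simp
  rcases eq_or_ne b 0 with rfl | hb0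
  · simp
  -- This multiple of `b` has length `‖d‖ / 2`, which makes `‖d‖² / 4 + ‖b‖²` equal `‖d‖ ‖b‖`.
  set t := ‖d‖ / (2 * ‖b‖) with ht
  have ht0 : 0 < t := by positivity
  have h := hf.le_inner_grad_sub_of_sq hx hd (S.smul_mem t hb)
  rw [inner_smul_right, inner_smul_right, norm_smul, Real.norm_of_nonneg ht0.le,
    show ‖d‖ ^ 2 / 4 + (t * ‖b‖) ^ 2 = t * (‖d‖ * ‖b‖) by rw [ht]; field_simp; ring] at h
  refine le_of_mul_le_mul_left ?_ ht0
  linarith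

end HasPinchedHessian

end PinchedHessian

section Frobenius

open scoped Matrix.Norms.Frobenius

variable {m n : Type*} [Fintype m] [Fintype n]

/-- The trace inner product `⟨A, B⟩ = tr (Aᵀ B)` on real matrices, whose norm is Mathlib's Frobenius
norm. A local instance, as that norm itself is scoped. -/
noncomputable abbrev frobeniusInnerProductSpace : InnerProductSpace ℝ (Matrix m n ℝ) where
  inner A B := ∑ i, ∑ j, A i j * B i j
  norm_sq_eq_re_inner A := by
    rw [frobenius_norm_def, ← Real.sqrt_eq_rpow, Real.sq_sqrt (by positivity)]
    simp [← sq]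
  conj_inner_symm A B := by simp [mul_comm]
  add_left A B C := by simp [add_mul, Finset.sum_add_distrib]
  smul_left A B c := by simp [mul_assoc, Finset.mul_sum]

attribute [local instance] frobeniusInnerProductSpace

theorem trInner_eq_inner {m n : ℕ} (A B : Matrix (Fin m) (Fin n) ℝ) : trInner A B = ⟪A, B⟫_ℝ :=
  rfl

theorem frob_eq_norm {m n : ℕ} (A : Matrix (Fin m) (Fin n) ℝ) : frob A = ‖A‖ := by
  simp [frob, frobenius_norm_def, Real.sqrt_eq_rpow]

theorem frobenius_inner_eq_trace (A B : Matrix m n ℝ) : ⟪A, B⟫_ℝ = (Aᵀ * B).trace :=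
  Finset.sum_comm

theorem frobenius_inner_mul_transpose {k : Type*} [Fintype k] (A : Matrix m n ℝ) (B : Matrix m k ℝ)
    (C : Matrix n k ℝ) : ⟪A, B * Cᵀ⟫_ℝ = ⟪A * C, B⟫_ℝ := by
  rw [frobenius_inner_eq_trace, frobenius_inner_eq_trace, transpose_mul, ← Matrix.mul_assoc,
    trace_mul_comm, Matrix.mul_assoc]

theorem frobenius_inner_vecMulVec (A : Matrix m n ℝ) (a : m → ℝ) (b : n → ℝ) :
    ⟪A, vecMulVec a b⟫_ℝ = a ⬝ᵥ (A *ᵥ b) := by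
  refine Finset.sum_congr rfl fun i _ ↦ ?_
  simp only [mulVec, dotProduct, vecMulVec_apply, Finset.mul_sum]
  exact Finset.sum_congr rfl fun j _ ↦ by ring

theorem frobenius_norm_vecMulVec_sq (a : m → ℝ) (b : n → ℝ) :
    ‖vecMulVec a b‖ ^ 2 = (a ⬝ᵥ a) * (b ⬝ᵥ b) := by
  rw [← real_inner_self_eq_norm_sq, frobenius_inner_vecMulVec, vecMulVec_mulVec,
    op_smul_eq_smul, dotProduct_smul, smul_eq_mul, mul_comm]

theorem two_mul_frobenius_inner_mul_transpose_le (G : Matrix m m ℝ) (Y : Matrix m n ℝ)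
    (C : Matrix n n ℝ) : 2 * ⟪G, Y * C * Yᵀ⟫_ℝ ≤ ‖(2 : ℝ) • (G * Y)‖ * ‖Y * C‖ := by
  rw [frobenius_inner_mul_transpose, ← real_inner_smul_left]
  exact real_inner_le_norm _ _

theorem frobenius_norm_transpose_mul_self (Y : Matrix m n ℝ) : ‖Yᵀ * Y‖ = ‖Y * Yᵀ‖ := by
  rw [← sq_eq_sq₀ (norm_nonneg _) (norm_nonneg _), ← real_inner_self_eq_norm_sq,
    ← real_inner_self_eq_norm_sq, frobenius_inner_eq_trace, frobenius_inner_eq_trace]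
  simp only [transpose_mul, transpose_transpose, Matrix.mul_assoc]
  rw [trace_mul_comm]
  simp only [Matrix.mul_assoc]

theorem frobenius_norm_sq_le_sqrt_card_mul (Y : Matrix m n ℝ) :
    ‖Y‖ ^ 2 ≤ √(Fintype.card n) * ‖Y * Yᵀ‖ := by
  classical
  have hone : ‖(1 : Matrix n n ℝ)‖ = √(Fintype.card n) := by
    simpa using congrArg NNReal.toReal (frobenius_nnnorm_one (n := n) (α := ℝ))
  calc ‖Y‖ ^ 2 = ⟪1, Yᵀ * Y⟫_ℝ := by
        rw [← real_inner_self_eq_norm_sq, frobenius_inner_eq_trace, frobenius_inner_eq_trace,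
          transpose_one, Matrix.one_mul]
    _ ≤ ‖(1 : Matrix n n ℝ)‖ * ‖Yᵀ * Y‖ := real_inner_le_norm _ _
    _ = √(Fintype.card n) * ‖Y * Yᵀ‖ := by rw [hone, frobenius_norm_transpose_mul_self]

theorem frobenius_norm_le_sqrt_card_mul_sqrt (Y : Matrix m n ℝ) :
    ‖Y‖ ≤ √(Fintype.card n) * √‖Y * Yᵀ‖ := by
  have hcard : √(Fintype.card n) ≤ (Fintype.card n : ℝ) :=
    Real.sqrt_le_iff.2 ⟨Nat.cast_nonneg _, mod_cast Nat.le_self_pow two_ne_zero _⟩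
  rw [← Real.sqrt_mul (Nat.cast_nonneg _)]
  exact Real.le_sqrt_of_sq_le ((frobenius_norm_sq_le_sqrt_card_mul Y).trans
    (mul_le_mul_of_nonneg_right hcard (norm_nonneg _)))

end Frobenius

section Spectral

open scoped Matrix.Norms.L2Operator

variable {m n : ℕ}

theorem isGreatest_eigVal_one {A : Matrix (Fin n) (Fin n) ℝ} (hn : 0 < n) (hA : A.IsHermitian) :
    IsGreatest (Set.range hA.eigenvalues) (eigVal A 1) := by
  have hlast : n - 1 < n := Nat.sub_one_lt hn.ne'
  rw [eigVal, dif_pos hA, dif_pos hlast]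
  refine ⟨Set.mem_range_self _, ?_⟩
  rintro _ ⟨i, rfl⟩
  have hi : (Tuple.sort hA.eigenvalues).symm i ≤ ⟨n - 1, hlast⟩ :=
    Nat.le_sub_one_of_lt (Fin.is_lt _)
  simpa using Tuple.monotone_sort hA.eigenvalues hi

theorem l2_opNorm_eq_norm_eigenvalues {A : Matrix (Fin n) (Fin n) ℝ} (hA : A.IsHermitian) :
    ‖A‖ = ‖hA.eigenvalues‖ := by
  conv_lhs => rw [hA.spectral_theorem, Unitary.conjStarAlgAut_apply]
  rw [CStarRing.norm_mul_mem_unitary _ (Unitary.star_mem hA.eigenvectorUnitary.2),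
    CStarRing.norm_coe_unitary_mul, l2_opNorm_diagonal]
  rfl

theorem eigVal_one_eq_l2_opNorm {A : Matrix (Fin n) (Fin n) ℝ} (hA : A.PosSemidef) :
    eigVal A 1 = ‖A‖ := by
  rcases n.eq_zero_or_pos with rfl | hn
  · simp [eigVal, Subsingleton.elim A 0]
  obtain ⟨⟨i, hi⟩, hmax⟩ := isGreatest_eigVal_one hn hA.isHermitian
  rw [l2_opNorm_eq_norm_eigenvalues hA.isHermitian]
  refine le_antisymm (hi ▸ (Real.le_norm_self _).trans (norm_le_pi_norm _ i)) ?_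
  refine (pi_norm_le_iff_of_nonneg (hi ▸ hA.eigenvalues_nonneg i)).2 fun j ↦ ?_
  rw [Real.norm_of_nonneg (hA.eigenvalues_nonneg j)]
  exact hmax (Set.mem_range_self j)

theorem eigVal_gram_one (Y : Matrix (Fin m) (Fin n) ℝ) : eigVal (Yᵀ * Y) 1 = ‖Y‖ ^ 2 := by
  rw [sq, ← l2_opNorm_conjTranspose_mul_self]
  exact eigVal_one_eq_l2_opNorm (posSemidef_conjTranspose_mul_self Y)

theorem sval_one_eq_l2_opNorm (Y : Matrix (Fin m) (Fin n) ℝ) : sval Y 1 = ‖Y‖ := by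
  rw [sval, eigVal_gram_one, Real.sqrt_sq (norm_nonneg Y)]

theorem dotProduct_self_eq_norm_sq (z : Fin n → ℝ) : z ⬝ᵥ z = ‖WithLp.toLp 2 z‖ ^ 2 := by
  rw [EuclideanSpace.real_norm_sq_eq]
  simp only [dotProduct, sq]

theorem exists_gram_mulVec_eq_sval_one_sq_smul (hn : 0 < n) (Y : Matrix (Fin m) (Fin n) ℝ) :
    ∃ v : Fin n → ℝ, v ⬝ᵥ v = 1 ∧ (Yᵀ * Y) *ᵥ v = sval Y 1 ^ 2 • v := by
  have hA : (Yᵀ * Y).IsHermitian := isHermitian_conjTranspose_mul_self Y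
  obtain ⟨i, hi⟩ := (isGreatest_eigVal_one hn hA).1
  refine ⟨hA.eigenvectorBasis i, ?_, ?_⟩
  · rw [dotProduct_self_eq_norm_sq, WithLp.toLp_ofLp, hA.eigenvectorBasis.norm_eq_one, one_pow]
  · rw [sval_one_eq_l2_opNorm, ← eigVal_gram_one, ← hi]
    exact hA.mulVec_eigenvectorBasis i

theorem dotProduct_mul_transpose_mulVec_le (Y : Matrix (Fin m) (Fin n) ℝ) (z : Fin m → ℝ) :
    z ⬝ᵥ ((Y * Yᵀ) *ᵥ z) ≤ sval Y 1 ^ 2 * (z ⬝ᵥ z) := by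
  calc z ⬝ᵥ ((Y * Yᵀ) *ᵥ z) = ‖WithLp.toLp 2 (Yᵀ *ᵥ z)‖ ^ 2 := by
        rw [← dotProduct_self_eq_norm_sq, ← mulVec_mulVec, dotProduct_mulVec, ← mulVec_transpose]
    _ ≤ (‖Y‖ * ‖WithLp.toLp 2 z‖) ^ 2 := by
        rw [← l2_opNorm_conjTranspose Y]
        exact pow_le_pow_left₀ (norm_nonneg _) (l2_opNorm_mulVec Yᴴ (WithLp.toLp 2 z)) 2
    _ = sval Y 1 ^ 2 * (z ⬝ᵥ z) := by
        rw [sval_one_eq_l2_opNorm, mul_pow, dotProduct_self_eq_norm_sq]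

end Spectral

section LowRank

open scoped Matrix.Norms.Frobenius

attribute [local instance] frobeniusInnerProductSpace

variable {m n : Type*} [Fintype n]

/-- The matrices whose columns span a subspace of `W`. These linear spaces of matrices of rank at
most `finrank W` are where the rank restriction on the Hessian is put to use. -/
def colSpanLE (n : Type*) [Fintype n] (W : Submodule ℝ (m → ℝ)) : Submodule ℝ (Matrix m n ℝ) where
  carrier := {A | ∀ v, A *ᵥ v ∈ W}
  zero_mem' v := by simp
  add_mem' hA hB v := by
    rw [add_mulVec]
    exact W.add_mem (hA v) (hB v)
  smul_mem' c A hA v := by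
    rw [smul_mulVec]
    exact W.smul_mem c (hA v)

theorem mul_mem_colSpanLE {k : Type*} [Fintype k] {W : Submodule ℝ (m → ℝ)} {A : Matrix m n ℝ}
    (hA : LinearMap.range A.mulVecLin ≤ W) (B : Matrix n k ℝ) : A * B ∈ colSpanLE k W := fun v ↦ by
  rw [← mulVec_mulVec]
  exact hA ⟨_, rfl⟩

theorem rank_le_finrank_of_mem_colSpanLE [Finite m] {W : Submodule ℝ (m → ℝ)} {A : Matrix m n ℝ}
    (hA : A ∈ colSpanLE n W) : A.rank ≤ Module.finrank ℝ W :=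
  Submodule.finrank_mono (LinearMap.range_le_iff_comap.2 (eq_top_iff.2 fun v _ ↦ hA v))

variable [Fintype m]

/-- The norm dual to the Frobenius norm on matrices of rank at most `r`, that is, the Frobenius norm
of the best rank-`r` approximation of `A`. The quantity `N` is `rankNorm r (∇f X*)`. -/
noncomputable def rankNorm (r : ℕ) (A : Matrix m n ℝ) : ℝ :=
  sSup {c | ∃ B : Matrix m n ℝ, B.rank ≤ r ∧ ‖B‖ ≤ 1 ∧ c = ⟪B, A⟫_ℝ}

theorem inner_le_rankNorm_mul_norm {r : ℕ} {B : Matrix m n ℝ} (hB : B.rank ≤ r)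
    (A : Matrix m n ℝ) : ⟪A, B⟫_ℝ ≤ rankNorm r A * ‖B‖ := by
  rcases eq_or_ne B 0 with rfl | hB0
  · simp
  have hbdd : BddAbove {c | ∃ B : Matrix m n ℝ, B.rank ≤ r ∧ ‖B‖ ≤ 1 ∧ c = ⟪B, A⟫_ℝ} := by
    refine ⟨‖A‖, ?_⟩
    rintro _ ⟨B, -, hB1, rfl⟩
    exact (real_inner_le_norm B A).trans (mul_le_of_le_one_left (norm_nonneg A) hB1)
  have hnorm : 0 < ‖B‖ := norm_pos_iff.2 hB0
  have hrank : (‖B‖⁻¹ • B).rank ≤ r := by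
    rwa [rank_smul_of_mem_nonZeroDivisors B
      (mem_nonZeroDivisors_of_ne_zero (inv_ne_zero hnorm.ne'))]
  have hle : ⟪‖B‖⁻¹ • B, A⟫_ℝ ≤ rankNorm r A :=
    le_csSup hbdd ⟨_, hrank, (norm_smul_inv_norm (𝕜 := ℝ) hB0).le, rfl⟩
  rwa [real_inner_smul_left, real_inner_comm, inv_mul_le_iff₀' hnorm] at hle

/-- The `(k, l)`-restricted strong convexity and smoothness of `f` with parameter `δ`, where `g` is
the gradient and `h` the Hessian quadratic form of `f` for the trace inner product. -/
def IsRestrictedConvexSmooth (f : Matrix m m ℝ → ℝ) (g : Matrix m m ℝ → Matrix m m ℝ)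
    (h : Matrix m m ℝ → Matrix m m ℝ → ℝ) (k l : ℕ) (δ : ℝ) : Prop :=
  HasPinchedHessian f g h {A | A.rank ≤ k} {A | A.rank ≤ l} (1 - δ) (1 + δ)

namespace IsRestrictedConvexSmooth

variable {f : Matrix m m ℝ → ℝ} {g : Matrix m m ℝ → Matrix m m ℝ}
  {h : Matrix m m ℝ → Matrix m m ℝ → ℝ} {r : ℕ} {δ : ℝ} {X : Matrix m m ℝ} {Y : Matrix m n ℝ}

theorem le_inner_grad_mul_transpose
    (hf : IsRestrictedConvexSmooth f g h (2 * r) (2 * r) δ)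
    (hX : X.rank ≤ r) (hY : Y.rank ≤ r) (C : Matrix n n ℝ) :
    ⟪Y * Yᵀ - X, Y * C * Yᵀ⟫_ℝ - (δ * ‖Y * Yᵀ - X‖ + rankNorm r (g X)) * ‖Y * C * Yᵀ‖ ≤
      ⟪g (Y * Yᵀ), Y * C * Yᵀ⟫_ℝ := by
  classical
  let W := LinearMap.range Y.mulVecLin ⊔ LinearMap.range X.mulVecLin
  have hW : Module.finrank ℝ W ≤ 2 * r :=
    (Submodule.finrank_add_le_finrank_add_finrank _ _).trans
      ((add_le_add hY hX).trans_eq (two_mul r).symm)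
  have hlow : (colSpanLE m W : Set (Matrix m m ℝ)) ⊆ {A | A.rank ≤ 2 * r} := fun A hA ↦
    (rank_le_finrank_of_mem_colSpanLE hA).trans hW
  have hYW (B : Matrix n m ℝ) : Y * B ∈ colSpanLE m W := mul_mem_colSpanLE le_sup_left B
  have hXW : X ∈ colSpanLE m W := by
    simpa using mul_mem_colSpanLE (W := W) le_sup_right (1 : Matrix m m ℝ)
  have hgrad := (HasPinchedHessian.mono hf hlow hlow).le_inner_grad_sub hXW (sub_mem (hYW Yᵀ) hXW)
    (Matrix.mul_assoc Y C Yᵀ ▸ hYW (C * Yᵀ))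
  have hN : -⟪g X, Y * C * Yᵀ⟫_ℝ ≤ rankNorm r (g X) * ‖Y * C * Yᵀ‖ := by
    have hrank : (Y * (-(C * Yᵀ))).rank ≤ r := (rank_mul_le_left _ _).trans hY
    rw [Matrix.mul_neg, ← Matrix.mul_assoc] at hrank
    simpa using inner_le_rankNorm_mul_norm hrank (g X)
  rw [add_sub_cancel, inner_sub_left (g _)] at hgrad
  linarith

theorem two_mul_le_norm_grad_mul_mul_norm
    (hf : IsRestrictedConvexSmooth f g h (2 * r) (2 * r) δ)
    (hX : X.rank ≤ r) (hY : Y.rank ≤ r) (C : Matrix n n ℝ) :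
    2 * (⟪Y * Yᵀ - X, Y * C * Yᵀ⟫_ℝ -
      (δ * ‖Y * Yᵀ - X‖ + rankNorm r (g X)) * ‖Y * C * Yᵀ‖) ≤
      ‖(2 : ℝ) • (g (Y * Yᵀ) * Y)‖ * ‖Y * C‖ :=
  (mul_le_mul_of_nonneg_left (hf.le_inner_grad_mul_transpose hX hY C) zero_le_two).trans
    (two_mul_frobenius_inner_mul_transpose_le _ _ _)

theorem two_mul_sqrt_norm_mul_transpose_mul_le
    (hf : IsRestrictedConvexSmooth f g h (2 * r) (2 * r) δ)
    (hX : X.rank ≤ r) (hY : Y.rank ≤ r) :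
    2 * √‖Y * Yᵀ‖ * (‖Y * Yᵀ‖ - ‖X‖ - (δ * ‖Y * Yᵀ - X‖ + rankNorm r (g X))) ≤
      √(Fintype.card n) * ‖(2 : ℝ) • (g (Y * Yᵀ) * Y)‖ := by
  classical
  rcases (norm_nonneg (Y * Yᵀ)).eq_or_lt with h0 | h0
  · rw [← h0, Real.sqrt_zero, mul_zero, zero_mul]
    positivity
  have hC := hf.two_mul_le_norm_grad_mul_mul_norm hX hY 1
  rw [Matrix.mul_one] at hC
  have hinner : ‖Y * Yᵀ‖ ^ 2 - ‖X‖ * ‖Y * Yᵀ‖ ≤ ⟪Y * Yᵀ - X, Y * Yᵀ⟫_ℝ := by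
    rw [inner_sub_left, real_inner_self_eq_norm_sq]
    exact sub_le_sub_left (real_inner_le_norm X _) _
  set E := δ * ‖Y * Yᵀ - X‖ + rankNorm r (g X)
  set G := ‖(2 : ℝ) • (g (Y * Yᵀ) * Y)‖
  refine le_of_mul_le_mul_right ?_ (Real.sqrt_pos.2 h0)
  calc 2 * √‖Y * Yᵀ‖ * (‖Y * Yᵀ‖ - ‖X‖ - E) * √‖Y * Yᵀ‖
      = 2 * (‖Y * Yᵀ‖ ^ 2 - ‖X‖ * ‖Y * Yᵀ‖ - E * ‖Y * Yᵀ‖) := by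
        linear_combination 2 * (‖Y * Yᵀ‖ - ‖X‖ - E) * Real.mul_self_sqrt h0.le
    _ ≤ G * ‖Y‖ := by linarith
    _ ≤ G * (√(Fintype.card n) * √‖Y * Yᵀ‖) :=
        mul_le_mul_of_nonneg_left (frobenius_norm_le_sqrt_card_mul_sqrt Y) (norm_nonneg _)
    _ = √(Fintype.card n) * G * √‖Y * Yᵀ‖ := by ring

theorem lt_norm_grad_mul_of_mul_norm_lt {γ : ℝ}
    (hf : IsRestrictedConvexSmooth f g h (2 * r) (2 * r) δ)
    (hX : X.rank ≤ r) (hY : Y.rank ≤ r) (hδ0 : 0 ≤ δ) (hγ : 1 < γ)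
    (hδ : δ ≤ (γ - 1) / (4 * (γ + 1))) (hN : rankNorm r (g X) ≤ (γ - 1) / 4 * ‖X‖)
    (hYX : γ * ‖X‖ < ‖Y * Yᵀ‖) :
    (γ - 1) * √γ * (‖X‖ * √‖X‖) / √(Fintype.card n) < ‖(2 : ℝ) • (g (Y * Yᵀ) * Y)‖ := by
  have hγ0 : 0 < γ := one_pos.trans hγ
  have hδd : δ * ‖Y * Yᵀ - X‖ ≤ (‖Y * Yᵀ‖ - ‖X‖) / 4 := by
    calc δ * ‖Y * Yᵀ - X‖ ≤ (γ - 1) / (4 * (γ + 1)) * (‖Y * Yᵀ‖ + ‖X‖) :=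
          mul_le_mul hδ (norm_sub_le _ _) (norm_nonneg _) (hδ0.trans hδ)
      _ ≤ (‖Y * Yᵀ‖ - ‖X‖) / 4 := by
          rw [div_mul_eq_mul_div, div_le_iff₀ (by positivity)]
          linarith
  have hlower : √‖Y * Yᵀ‖ * (‖Y * Yᵀ‖ - ‖X‖) ≤
      √(Fintype.card n) * ‖(2 : ℝ) • (g (Y * Yᵀ) * Y)‖ := by
    calc √‖Y * Yᵀ‖ * (‖Y * Yᵀ‖ - ‖X‖)
        = 2 * √‖Y * Yᵀ‖ * (‖Y * Yᵀ‖ - ‖X‖ - (‖Y * Yᵀ‖ - ‖X‖) / 2) := by ring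
      _ ≤ 2 * √‖Y * Yᵀ‖ * (‖Y * Yᵀ‖ - ‖X‖ - (δ * ‖Y * Yᵀ - X‖ + rankNorm r (g X))) := by
          gcongr
          linarith
      _ ≤ √(Fintype.card n) * ‖(2 : ℝ) • (g (Y * Yᵀ) * Y)‖ :=
          hf.two_mul_sqrt_norm_mul_transpose_mul_le hX hY
  have hroot : √γ * √‖X‖ < √‖Y * Yᵀ‖ := by
    rw [← Real.sqrt_mul hγ0.le]
    exact Real.sqrt_lt_sqrt (by positivity) hYX
  have hgap : (γ - 1) * ‖X‖ < ‖Y * Yᵀ‖ - ‖X‖ := by linarith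
  have hlt : (γ - 1) * √γ * (‖X‖ * √‖X‖) < √(Fintype.card n) * ‖(2 : ℝ) • (g (Y * Yᵀ) * Y)‖ :=
    calc (γ - 1) * √γ * (‖X‖ * √‖X‖) = √γ * √‖X‖ * ((γ - 1) * ‖X‖) := by ring
      _ < √‖Y * Yᵀ‖ * (‖Y * Yᵀ‖ - ‖X‖) := mul_lt_mul'' hroot hgap (by positivity)
          (mul_nonneg (sub_nonneg.2 hγ.le) (norm_nonneg X))
      _ ≤ _ := hlower
  have hnonneg : 0 ≤ (γ - 1) * √γ * (‖X‖ * √‖X‖) :=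
    mul_nonneg (mul_nonneg (sub_nonneg.2 hγ.le) (Real.sqrt_nonneg γ)) (by positivity)
  rwa [div_lt_iff₀' (pos_of_mul_pos_left (hnonneg.trans_lt hlt) (norm_nonneg _))]

end IsRestrictedConvexSmooth

end LowRank

section LargeGradient

open scoped Matrix.Norms.Frobenius

attribute [local instance] frobeniusInnerProductSpace

variable {p k r : ℕ} {f : Matrix (Fin p) (Fin p) ℝ → ℝ}
  {g : Matrix (Fin p) (Fin p) ℝ → Matrix (Fin p) (Fin p) ℝ}
  {h : Matrix (Fin p) (Fin p) ℝ → Matrix (Fin p) (Fin p) ℝ → ℝ} {δ : ℝ}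
  {X : Matrix (Fin p) (Fin p) ℝ} {Y : Matrix (Fin p) (Fin k) ℝ}

namespace IsRestrictedConvexSmooth

theorem of_trInner {k l l' : ℕ} (hl : l ≤ l')
    (hg : ∀ X D, HasDerivAt (fun t : ℝ ↦ f (X + t • D)) (trInner (g X) D) 0)
    (hh : ∀ X G, HasDerivAt (fun t : ℝ ↦ trInner (g (X + t • G)) G) (h X G) 0)
    (hle : ∀ X G : Matrix (Fin p) (Fin p) ℝ, X.rank ≤ k → G.rank ≤ l' →
      (1 - δ) * frob G ^ 2 ≤ h X G ∧ h X G ≤ (1 + δ) * frob G ^ 2) :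
    IsRestrictedConvexSmooth f g h k l δ where
  hasLineDerivAt_fun X D := trInner_eq_inner (g X) D ▸ hg X D
  hasLineDerivAt_grad := hh
  le_hess X hX G hG := frob_eq_norm G ▸ (hle X G hX (hG.trans hl)).1
  hess_le X hX G hG := frob_eq_norm G ▸ (hle X G hX (hG.trans hl)).2

theorem two_mul_sval_one_mul_le {c : ℝ}
    (hf : IsRestrictedConvexSmooth f g h (2 * r) (2 * r) δ)
    (hX : X.rank ≤ r) (hY : Y.rank ≤ r) (hXc : ∀ z, z ⬝ᵥ (X *ᵥ z) ≤ c * (z ⬝ᵥ z)) :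
    2 * sval Y 1 * (sval Y 1 ^ 2 - c - (δ * ‖Y * Yᵀ - X‖ + rankNorm r (g X))) ≤
      ‖(2 : ℝ) • (g (Y * Yᵀ) * Y)‖ := by
  have hσ : 0 ≤ sval Y 1 := Real.sqrt_nonneg _
  rcases hσ.eq_or_lt with h0 | h0
  · simp [← h0]
  have hk : 0 < k := Nat.pos_of_ne_zero fun hk ↦ by
    subst hk
    simp [sval, eigVal] at h0
  obtain ⟨v, hv, hYv⟩ := exists_gram_mulVec_eq_sval_one_sq_smul hk Y
  set z := Y *ᵥ v with hz
  have hzz : z ⬝ᵥ z = sval Y 1 ^ 2 := by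
    rw [hz, dotProduct_mulVec, ← mulVec_transpose, mulVec_mulVec, hYv, smul_dotProduct, hv,
      smul_eq_mul, mul_one]
  have hYYz : z ⬝ᵥ ((Y * Yᵀ) *ᵥ z) = sval Y 1 ^ 4 := by
    rw [hz, mulVec_mulVec, Matrix.mul_assoc, ← mulVec_mulVec, hYv, mulVec_smul, ← hz,
      dotProduct_smul, hzz, smul_eq_mul]
    ring
  have hYC : Y * vecMulVec v v = vecMulVec z v := mul_vecMulVec _ _ _
  have hYCY : Y * vecMulVec v v * Yᵀ = vecMulVec z z := by
    rw [hYC, vecMulVec_mul, vecMul_transpose]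
  have hnYC : ‖vecMulVec z v‖ = sval Y 1 := by
    rw [← sq_eq_sq₀ (norm_nonneg _) hσ, frobenius_norm_vecMulVec_sq, hzz, hv, mul_one]
  have hnYCY : ‖vecMulVec z z‖ = sval Y 1 ^ 2 := by
    rw [← sq_eq_sq₀ (norm_nonneg _) (sq_nonneg _), frobenius_norm_vecMulVec_sq, hzz, sq (_ ^ 2)]
  have hC := hf.two_mul_le_norm_grad_mul_mul_norm hX hY (vecMulVec v v)
  rw [hYCY, hYC, hnYC, hnYCY, inner_sub_left, frobenius_inner_vecMulVec, frobenius_inner_vecMulVec,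
    hYYz] at hC
  have hXz := hXc z
  rw [hzz] at hXz
  refine le_of_mul_le_mul_right (le_trans ?_ hC) h0
  linarith

theorem le_norm_grad_mul_of_mul_sval_one_lt {β γ : ℝ} {Z : Matrix (Fin p) (Fin r) ℝ}
    (hf : IsRestrictedConvexSmooth f g h (2 * r) (2 * r) δ) (hY : Y.rank ≤ r) (hδ0 : 0 ≤ δ)
    (hβ : 1 < β) (hγ : 0 < γ)
    (hδ : δ ≤ (β ^ 2 - 1) / (4 * (1 + γ)) * (sval Z 1 ^ 2 / ‖Z * Zᵀ‖))
    (hN : rankNorm r (g (Z * Zᵀ)) ≤ (β ^ 2 - 1) / 4 * sval Z 1 ^ 2)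
    (hσ : β * sval Z 1 < sval Y 1) (hYZ : ‖Y * Yᵀ‖ ≤ γ * ‖Z * Zᵀ‖) :
    sval Y 1 ^ 3 - sval Y 1 * sval Z 1 ^ 2 ≤ ‖(2 : ℝ) • (g (Y * Yᵀ) * Y)‖ := by
  have hZ0 : 0 ≤ sval Z 1 := Real.sqrt_nonneg _
  have hβZ0 : 0 ≤ β * sval Z 1 := mul_nonneg (one_pos.trans hβ).le hZ0
  have hσ0 : 0 ≤ sval Y 1 := hβZ0.trans hσ.le
  have hgap : (β ^ 2 - 1) * sval Z 1 ^ 2 ≤ sval Y 1 ^ 2 - sval Z 1 ^ 2 := by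
    linarith [pow_le_pow_left₀ hβZ0 hσ.le 2, mul_pow β (sval Z 1) 2]
  have hδd : δ * ‖Y * Yᵀ - Z * Zᵀ‖ ≤ (β ^ 2 - 1) / 4 * sval Z 1 ^ 2 := by
    have hd : ‖Y * Yᵀ - Z * Zᵀ‖ ≤ (1 + γ) * ‖Z * Zᵀ‖ := by
      linarith [norm_sub_le (Y * Yᵀ) (Z * Zᵀ)]
    have hcancel : sval Z 1 ^ 2 / ‖Z * Zᵀ‖ * ‖Z * Zᵀ‖ ≤ sval Z 1 ^ 2 :=
      mul_le_of_le_div₀ (sq_nonneg _) (norm_nonneg _) le_rfl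
    calc δ * ‖Y * Yᵀ - Z * Zᵀ‖
        ≤ (β ^ 2 - 1) / (4 * (1 + γ)) * (sval Z 1 ^ 2 / ‖Z * Zᵀ‖) * ((1 + γ) * ‖Z * Zᵀ‖) :=
          mul_le_mul hδ hd (norm_nonneg _) (hδ0.trans hδ)
      _ = (β ^ 2 - 1) / 4 * (sval Z 1 ^ 2 / ‖Z * Zᵀ‖ * ‖Z * Zᵀ‖) := by field_simp
      _ ≤ (β ^ 2 - 1) / 4 * sval Z 1 ^ 2 :=
          mul_le_mul_of_nonneg_left hcancel
            (div_nonneg (sub_nonneg.2 (one_le_pow₀ hβ.le)) zero_le_four)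
  calc sval Y 1 ^ 3 - sval Y 1 * sval Z 1 ^ 2
      = 2 * sval Y 1 * (sval Y 1 ^ 2 - sval Z 1 ^ 2 - (sval Y 1 ^ 2 - sval Z 1 ^ 2) / 2) := by
        ring
    _ ≤ 2 * sval Y 1 * (sval Y 1 ^ 2 - sval Z 1 ^ 2 -
          (δ * ‖Y * Yᵀ - Z * Zᵀ‖ + rankNorm r (g (Z * Zᵀ)))) := by
        gcongr
        linarith
    _ ≤ ‖(2 : ℝ) • (g (Y * Yᵀ) * Y)‖ :=
        hf.two_mul_sval_one_mul_le ((rank_mul_le_left Z Zᵀ).trans (rank_le_width Z)) hY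
          (dotProduct_mul_transpose_mulVec_le Z)

end IsRestrictedConvexSmooth

theorem cube_sub_mul_cube_lt {β s σ : ℝ} (hβ : 1 < β) (hs : 0 ≤ s) (hσ : β * s < σ) :
    (β ^ 3 - β) * s ^ 3 < σ ^ 3 - σ * s ^ 2 := by
  have hβs : 0 ≤ β * s := mul_nonneg (one_pos.trans hβ).le hs
  have hsq : (β * s) ^ 2 < σ ^ 2 := pow_lt_pow_left₀ hσ hβs two_ne_zero
  calc (β ^ 3 - β) * s ^ 3 = β * s * ((β ^ 2 - 1) * s ^ 2) := by ring
    _ < σ * (σ ^ 2 - s ^ 2) := mul_lt_mul'' hσ (by linarith) hβs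
        (mul_nonneg (sub_nonneg.2 (one_le_pow₀ hβ.le)) (sq_nonneg s))
    _ = σ ^ 3 - σ * s ^ 2 := by ring

theorem stmt16_general (hδ : 0 ≤ δ) (hf : IsRestrictedConvexSmooth f g h (2 * r) (2 * r) δ)
    (Ystar : Matrix (Fin p) (Fin r) ℝ) (hX : X = Ystar * Ystarᵀ) :
    (∀ β γ : ℝ, 1 < β → 0 < γ →
      δ ≤ (β ^ 2 - 1) / (4 * (1 + γ)) * (sval Ystar 1 ^ 2 / ‖X‖) →
      rankNorm r (g X) ≤ (β ^ 2 - 1) / 4 * sval Ystar 1 ^ 2 →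
      ∀ Y : Matrix (Fin p) (Fin r) ℝ,
        sval Y 1 > β * sval Ystar 1 → ‖Y * Yᵀ‖ ≤ γ * ‖X‖ →
        ‖(2 : ℝ) • (g (Y * Yᵀ) * Y)‖ ≥ sval Y 1 ^ 3 - sval Y 1 * sval Ystar 1 ^ 2 ∧
        sval Y 1 ^ 3 - sval Y 1 * sval Ystar 1 ^ 2 > (β ^ 3 - β) * sval Ystar 1 ^ 3) ∧
    (∀ γ : ℝ, 1 < γ →
      δ ≤ (γ - 1) / (4 * (γ + 1)) →
      rankNorm r (g X) ≤ (γ - 1) / 4 * ‖X‖ →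
      ∀ Y : Matrix (Fin p) (Fin r) ℝ, ‖Y * Yᵀ‖ > γ * ‖X‖ →
        ‖(2 : ℝ) • (g (Y * Yᵀ) * Y)‖ > (γ - 1) * √γ * (‖X‖ * √‖X‖) / √r) := by
  subst hX
  refine ⟨fun β γ hβ hγ hδβ hN Y hσ hYX ↦ ⟨?_, cube_sub_mul_cube_lt hβ (Real.sqrt_nonneg _) hσ⟩,
    fun γ hγ hδγ hN Y hYX ↦ ?_⟩
  · exact hf.le_norm_grad_mul_of_mul_sval_one_lt (rank_le_width Y) hδ hβ hγ hδβ hN hσ hYX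
  · simpa using hf.lt_norm_grad_mul_of_mul_norm_lt
      ((rank_mul_le_left _ _).trans (rank_le_width Ystar)) (rank_le_width Y) hδ hγ hδγ hN hYX

end LargeGradient

/-- large gradient of `h` in the remaining regions: strict lower bounds on
the lifted Riemannian gradient of `h([Y]) = f(YYᵀ)` when the spectral norm of `Y` or the
Frobenius norm of `Y Yᵀ` is large. -/
theorem stmt16 {p r : ℕ}
    (f : Matrix (Fin p) (Fin p) ℝ → ℝ)
    (gradf : Matrix (Fin p) (Fin p) ℝ → Matrix (Fin p) (Fin p) ℝ)
    (hessf : Matrix (Fin p) (Fin p) ℝ → Matrix (Fin p) (Fin p) ℝ → ℝ)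
    (hgradf : ∀ X D : Matrix (Fin p) (Fin p) ℝ,
      HasDerivAt (fun t : ℝ => f (X + t • D)) (trInner (gradf X) D) 0)
    (hhessf : ∀ X G : Matrix (Fin p) (Fin p) ℝ,
      HasDerivAt (fun t : ℝ => trInner (gradf (X + t • G)) G) (hessf X G) 0)
    (δ : ℝ) (hδ0 : 0 ≤ δ) (hδ1 : δ < 1)
    (hRSCS : ∀ X G : Matrix (Fin p) (Fin p) ℝ, X.rank ≤ 2 * r → G.rank ≤ 4 * r →
      (1 - δ) * (frob G) ^ 2 ≤ hessf X G ∧ hessf X G ≤ (1 + δ) * (frob G) ^ 2)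
    (Ystar : Matrix (Fin p) (Fin r) ℝ) (hYs : Ystar.rank = r)
    (X : Matrix (Fin p) (Fin p) ℝ) (hX : X = Ystar * Ystarᵀ)
    (N : ℝ) (hN : N = sSup {c : ℝ | ∃ B : Matrix (Fin p) (Fin p) ℝ,
      B.rank ≤ r ∧ frob B ≤ 1 ∧ c = trInner B (gradf X)})
 :
    (∀ β γ : ℝ, 1 < β → 0 < γ →
      δ ≤ (β ^ 2 - 1) / (4 * (1 + γ)) * ((sval Ystar 1) ^ 2 / frob X) →
      N ≤ (β ^ 2 - 1) / 4 * (sval Ystar 1) ^ 2 →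
      ∀ Y : Matrix (Fin p) (Fin r) ℝ, Y.rank = r →
        sval Y 1 > β * sval Ystar 1 → frob (Y * Yᵀ) ≤ γ * frob X →
        frob ((2 : ℝ) • (gradf (Y * Yᵀ) * Y)) ≥
          (sval Y 1) ^ 3 - sval Y 1 * (sval Ystar 1) ^ 2 ∧
        (sval Y 1) ^ 3 - sval Y 1 * (sval Ystar 1) ^ 2 >
          (β ^ 3 - β) * (sval Ystar 1) ^ 3) ∧
    (∀ γ : ℝ, 1 < γ →
      δ ≤ (γ - 1) / (4 * (γ + 1)) →
      N ≤ (γ - 1) / 4 * frob X →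
      ∀ Y : Matrix (Fin p) (Fin r) ℝ, Y.rank = r →
        frob (Y * Yᵀ) > γ * frob X →
        frob ((2 : ℝ) • (gradf (Y * Yᵀ) * Y)) >
          (γ - 1) * Real.sqrt γ * (frob X * Real.sqrt (frob X)) / Real.sqrt r) := by
  obtain ⟨hii, hiii⟩ := stmt16_general hδ0 (.of_trInner (by lia) hgradf hhessf hRSCS) Ystar hX
  simp only [hN, frob_eq_norm, trInner_eq_inner]
  exact ⟨fun β γ hβ hγ hδ hN Y _ ↦ hii β γ hβ hγ hδ hN Y, fun γ hγ hδ hN Y _ ↦ hiii γ hγ hδ hN Y⟩
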